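/- Let λ = (λ^0, …, λ^{l−1}) be an l-partition of n. Then the following identity holds in the rational function field ℚ(q, Q_0, …, Q_{l−1}): (−1)^{n(l−1)} (Q_0 Q_1 ⋯ Q_{l−1})^{−n} q^{−α(λ')} · ∏_{s=0}^{l−1} ∏_{(i,j)∈[λ^s]} Q_s [h_{i,j}^{λ^s,λ^s}]_q · ∏_{0≤s<t≤l−1} X(λ^s, λ^t; Q_s, Q_t) = (−1)^{n(l−1)} q^{−n(λ̄)} (q−1)^{−n} · ∏_{s=0}^{l−1} ∏_{(i,j)∈[λ^s]} ∏_{t=0}^{l−1} (q^{h_{i,j}^{λ^s,λ^t}} Q_s Q_t^{−1} − 1). (The left-hand side is Mathas's formula for the Schur element s_λ(q) of the Ariki–Koike algebra; the right-hand side is the cancellation-free formula.) -/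

import Mathlib

/-- A partition, encoded as a weakly decreasing, eventually-zero sequence of
natural numbers; `parts i` is the `(i+1)`-st part `λ_{i+1}` (0-indexed rows). -/
structure Ptn where
  parts : ℕ → ℕ
  antitone' : Antitone parts
  eventually_zero : ∃ N, ∀ i, N ≤ i → parts i = 0

namespace Ptn

/-- `conj p k` is the conjugate-partition part `λ'_{k+1} = #{i ≥ 1 : λ_i ≥ k+1}`. -/
noncomputable def conj (p : Ptn) (k : ℕ) : ℕ := Nat.card {i : ℕ // k < p.parts i}

/-- `|λ| = Σ_{i ≥ 1} λ_i`. -/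
noncomputable def size (p : Ptn) : ℕ := ∑ᶠ i, p.parts i

/-- `n(λ) = Σ_{i ≥ 1} (i-1) λ_i`. -/
noncomputable def nn (p : Ptn) : ℕ := ∑ᶠ i, i * p.parts i

/-- The empty partition. -/
def empty : Ptn := ⟨fun _ => 0, fun _ _ _ => le_rfl, ⟨0, fun _ _ => rfl⟩⟩

end Ptn

/-- The generalised hook length `h_{i,j}^{λ,μ} = λ_i - i + μ'_j - j + 1`, for the node
in (0-indexed) row `i` and column `j`, i.e. the 1-indexed node `(i+1, j+1)`. -/
noncomputable def ghook (lam mu : Ptn) (i j : ℕ) : ℤ :=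
  (lam.parts i : ℤ) - (i + 1) + (mu.conj j : ℤ) - (j + 1) + 1

/-- The quantity `X(λ, μ; Q_s, Q_t) = ∏_{(i,j)∈[μ]} (q^{j-i} Q_t - Q_s) ·
∏_{(i,j)∈[λ]} ( (q^{j-i} Q_s - q^{μ_1} Q_t) ·
∏_{k=1}^{μ_1} (q^{j-i} Q_s - q^{k-1-μ'_k} Q_t)/(q^{j-i} Q_s - q^{k-μ'_k} Q_t) )`. -/
noncomputable def Xst {K : Type*} [Field K] (q Qs Qt : K) (lam mu : Ptn) : K :=
  (∏ᶠ i, ∏ j ∈ Finset.range (mu.parts i), (q ^ ((j : ℤ) - (i : ℤ)) * Qt - Qs)) *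
  ∏ᶠ i, ∏ j ∈ Finset.range (lam.parts i),
    ((q ^ ((j : ℤ) - (i : ℤ)) * Qs - q ^ (mu.parts 0 : ℤ) * Qt) *
      ∏ k ∈ Finset.range (mu.parts 0),
        (q ^ ((j : ℤ) - (i : ℤ)) * Qs - q ^ (((k : ℤ) + 1) - 1 - (mu.conj k : ℤ)) * Qt) /
          (q ^ ((j : ℤ) - (i : ℤ)) * Qs - q ^ (((k : ℤ) + 1) - (mu.conj k : ℤ)) * Qt))

/-- The rational function field `ℚ(q, Q_0, …, Q_{l-1})`. -/
noncomputable abbrev KK (l : ℕ) : Type := FractionRing (MvPolynomial (Fin (l + 1)) ℚ)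

/-- The indeterminate `q` of `ℚ(q, Q_0, …, Q_{l-1})`. -/
noncomputable def qK (l : ℕ) : KK l :=
  algebraMap (MvPolynomial (Fin (l + 1)) ℚ) (KK l) (MvPolynomial.X 0)

/-- The indeterminate `Q_s` of `ℚ(q, Q_0, …, Q_{l-1})`. -/
noncomputable def QK (l : ℕ) (s : Fin l) : KK l :=
  algebraMap (MvPolynomial (Fin (l + 1)) ℚ) (KK l) (MvPolynomial.X s.succ)

/-- `α(λ') = (1/2) Σ_{s=0}^{l-1} Σ_{i≥1} (λ^{s'}_i - 1) λ^{s'}_i` (a natural number,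
since each inner sum is even). -/
noncomputable def alphaConj {l : ℕ} (Λ : Fin l → Ptn) : ℕ :=
  (∑ s, ∑ᶠ k, ((Λ s).conj k - 1) * (Λ s).conj k) / 2

open Finset

namespace Ptn

theorem lt_conj_iff (p : Ptn) (i k : ℕ) : i < p.conj k ↔ k < p.parts i := by
  classical
  have hex : ∃ m, p.parts m ≤ k := by
    obtain ⟨N, hN⟩ := p.eventually_zero
    exact ⟨N, by simp [hN N le_rfl]⟩
  have hset : ∀ j, k < p.parts j ↔ j < Nat.find hex := by
    intro j
    rw [Nat.lt_find_iff]
    refine ⟨fun h m hm hle => ?_, fun h => not_le.mp (h j le_rfl)⟩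
    have := p.antitone' hm
    omega
  have hc : p.conj k = Nat.find hex := by
    rw [conj, Nat.card_congr (Equiv.subtypeEquivRight hset)]
    simpa using Nat.subtype_card (range (Nat.find hex)) fun _ => mem_range
  rw [hc, hset]

/-- The set of nodes of a partition, as 0-indexed pairs (row, column). -/
noncomputable def cells (p : Ptn) : Finset (ℕ × ℕ) :=
  {c ∈ range (p.conj 0) ×ˢ range (p.parts 0) | c.2 < p.parts c.1}

theorem mem_cells {p : Ptn} {c : ℕ × ℕ} : c ∈ p.cells ↔ c.2 < p.parts c.1 := by
  simp only [cells, mem_filter, mem_product, mem_range, lt_conj_iff, and_iff_right_iff_imp]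
  intro h
  have := p.antitone' (Nat.zero_le c.1)
  omega

theorem conj_eq_zero {p : Ptn} {k : ℕ} (h : p.parts 0 ≤ k) : p.conj k = 0 := by
  by_contra h0
  have := (p.lt_conj_iff 0 k).1 (Nat.pos_of_ne_zero h0)
  omega

variable {M : Type*} [CommMonoid M]

@[to_additive]
theorem prod_cells_eq_prod_rows (p : Ptn) (g : ℕ × ℕ → M) :
    ∏ c ∈ p.cells, g c = ∏ i ∈ range (p.conj 0), ∏ j ∈ range (p.parts i), g (i, j) := by
  refine prod_finset_product' _ _ _ (f := fun i j => g (i, j)) fun c => ?_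
  simp only [mem_cells, mem_range, lt_conj_iff]
  omega

@[to_additive]
theorem prod_cells_eq_prod_columns (p : Ptn) {B : ℕ} (hB : p.parts 0 ≤ B) (g : ℕ × ℕ → M) :
    ∏ c ∈ p.cells, g c = ∏ k ∈ range B, ∏ i ∈ range (p.conj k), g (i, k) := by
  refine prod_finset_product_right' _ _ _ (f := fun i j => g (i, j)) fun c => ?_
  simp only [mem_cells, mem_range, lt_conj_iff]
  have := p.antitone' (Nat.zero_le c.1)
  omega

@[to_additive]
theorem finprod_rows (p : Ptn) (g : ℕ → ℕ → M) :
    ∏ᶠ i, ∏ j ∈ range (p.parts i), g i j = ∏ c ∈ p.cells, g c.1 c.2 := by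
  rw [prod_cells_eq_prod_rows]
  refine finprod_eq_prod_of_mulSupport_subset _ fun i hi => ?_
  rw [coe_range, Set.mem_Iio, lt_conj_iff]
  by_contra h
  exact hi (by simp [Nat.eq_zero_of_not_pos h])

theorem size_eq_card_cells (p : Ptn) : p.size = #p.cells := by
  have h := p.finsum_rows (fun _ _ => 1)
  simp only [sum_const, card_range, smul_eq_mul, mul_one] at h
  exact h

theorem prod_cells_reflect (p : Ptn) (g : ℕ → ℕ → M) :
    ∏ c ∈ p.cells, g c.1 (p.parts c.1 - 1 - c.2) = ∏ c ∈ p.cells, g c.1 c.2 := by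
  simp only [prod_cells_eq_prod_rows]
  exact prod_congr rfl fun i _ => prod_range_reflect (g i) _

theorem prod_cells_column_comm (p r : Ptn) (g : ℕ → ℕ → ℕ → M) :
    ∏ c ∈ p.cells, ∏ i ∈ range (r.conj c.2), g c.1 i c.2 =
      ∏ d ∈ r.cells, ∏ a ∈ range (p.conj d.2), g a d.1 d.2 := by
  rw [p.prod_cells_eq_prod_columns (le_max_left _ (r.parts 0)),
    r.prod_cells_eq_prod_columns (le_max_right (p.parts 0) _)]
  exact prod_congr rfl fun k _ => by dsimp only; exact prod_comm

theorem nn_eq_sum_choose (p : Ptn) {B : ℕ} (hB : p.parts 0 ≤ B) :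
    p.nn = ∑ k ∈ range B, (p.conj k).choose 2 := by
  have h := p.finsum_rows (fun i _ => i)
  simp only [sum_const, card_range, smul_eq_mul] at h
  simp_rw [nn, mul_comm _ (p.parts _)]
  rw [h, p.sum_cells_eq_sum_columns hB]
  exact sum_congr rfl fun k _ => (sum_range_id _).trans (Nat.choose_two_right _).symm

end Ptn

section Telescoping

variable {K : Type*} [Field K] {f : ℤ → K}

theorem prod_Ico_div_of_ne_zero {g : ℕ → K} (hg : ∀ n, g n ≠ 0) {m n : ℕ} (h : m ≤ n) :
    ∏ i ∈ Ico m n, g i / g (i + 1) = g m / g n := by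
  induction n, h using Nat.le_induction with
  | base => simp [hg]
  | succ n h ih =>
    rw [prod_Ico_succ_top h, ih]
    field_simp [hg n, hg (n + 1)]

/-- The product over the columns of `p` left of `b`, times the boundary product over the column
`b`; it does not depend on `b`. -/
noncomputable def boundaryProd (f : ℤ → K) (p : Ptn) (c : ℤ) (b : ℕ) : K :=
  f (c - b + p.conj b) *
    (∏ k ∈ range b, f (c - k + p.conj k) / f (c - k - 1 + p.conj k)) *
    ∏ i ∈ range (p.conj b), f (c + i - p.parts i) / f (c + i + 1 - p.parts i)

theorem boundaryProd_succ (hf : ∀ m, f m ≠ 0) (p : Ptn) (c : ℤ) (b : ℕ) :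
    boundaryProd f p c (b + 1) = boundaryProd f p c b := by
  have hle : p.conj (b + 1) ≤ p.conj b := by
    by_contra! h
    rw [p.lt_conj_iff] at h
    have := p.lt_conj_iff (p.conj b) b
    omega
  have htel : ∏ i ∈ Ico (p.conj (b + 1)) (p.conj b),
      f (c + i - p.parts i) / f (c + i + 1 - p.parts i) =
      f (c - b - 1 + p.conj (b + 1)) / f (c - b - 1 + p.conj b) := by
    rw [← prod_Ico_div_of_ne_zero (g := fun i : ℕ => f (c - b - 1 + i)) (fun _ => hf _) hle]
    refine prod_congr rfl fun i hi => ?_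
    rw [mem_Ico, p.lt_conj_iff, ← not_lt, p.lt_conj_iff] at hi
    have : p.parts i = b + 1 := by omega
    rw [this]
    push_cast
    congr 2 <;> ring
  rw [boundaryProd, boundaryProd, ← prod_range_mul_prod_Ico _ hle, htel, prod_range_succ]
  have e : c - ((b + 1 : ℕ) : ℤ) + p.conj (b + 1) = c - b - 1 + p.conj (b + 1) := by
    push_cast; ring
  rw [e]
  have h₁ := hf (c - b - 1 + p.conj b)
  field_simp

theorem boundaryProd_eq (hf : ∀ m, f m ≠ 0) (p : Ptn) (c : ℤ) (b b' : ℕ) :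
    boundaryProd f p c b = boundaryProd f p c b' := by
  have h : ∀ b, boundaryProd f p c b = boundaryProd f p c 0 := fun b => by
    induction b with
    | zero => rfl
    | succ b ih => rw [boundaryProd_succ hf, ih]
  rw [h b, h b']

theorem boundaryProd_parts_zero (f : ℤ → K) (p : Ptn) (c : ℤ) :
    boundaryProd f p c (p.parts 0) = f (c - p.parts 0) *
      ∏ k ∈ range (p.parts 0), f (c - k + p.conj k) / f (c - k - 1 + p.conj k) := by
  simp [boundaryProd, Ptn.conj_eq_zero]

theorem prod_row_hook (hf : ∀ m, f m ≠ 0) (r : Ptn) (a L : ℕ) :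
    ∏ b ∈ range L, (f ((b : ℤ) - a - b + r.conj b) *
      ∏ k ∈ range b, f ((b : ℤ) - a - k + r.conj k) / f ((b : ℤ) - a - k - 1 + r.conj k)) =
      ∏ k ∈ range L, f ((L : ℤ) - a - 1 - k + r.conj k) := by
  induction L with
  | zero => simp
  | succ L ih =>
    rw [prod_range_succ, ih, prod_div_distrib, prod_range_succ]
    have h₁ : ∏ k ∈ range L, f ((L : ℤ) - a - 1 - k + r.conj k) =
        ∏ k ∈ range L, f ((L : ℤ) - a - k - 1 + r.conj k) :=
      prod_congr rfl fun k _ => by congr 1; ring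
    have h₂ : ∏ k ∈ range L, f (((L + 1 : ℕ) : ℤ) - a - 1 - k + r.conj k) =
        ∏ k ∈ range L, f ((L : ℤ) - a - k + r.conj k) :=
      prod_congr rfl fun k _ => by congr 1; push_cast; ring
    have h₃ : ((L + 1 : ℕ) : ℤ) - a - 1 - L + r.conj L = (L : ℤ) - a - L + r.conj L := by
      push_cast; ring
    have h₀ : ∏ k ∈ range L, f ((L : ℤ) - a - k - 1 + r.conj k) ≠ 0 :=
      prod_ne_zero_iff.2 fun _ _ => hf _
    rw [h₁, h₂, h₃]
    field_simp

/-- The cancellation underlying the comparison of the two formulas, for an arbitrary nowhere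
vanishing function of the contents and hook lengths. -/
theorem prod_content_eq_prod_ghook (hf : ∀ m, f m ≠ 0) (p r : Ptn) :
    (∏ c ∈ r.cells, f (c.1 - c.2)) *
      ∏ c ∈ p.cells, (f (c.2 - c.1 - r.parts 0) * ∏ k ∈ range (r.parts 0),
        f (c.2 - c.1 - k + r.conj k) / f (c.2 - c.1 - k - 1 + r.conj k)) =
    (∏ c ∈ p.cells, f (ghook p r c.1 c.2)) * ∏ c ∈ r.cells, f (-ghook r p c.1 c.2) := by
  have hsplit : ∀ c : ℕ × ℕ, f (c.2 - c.1 - r.parts 0) * ∏ k ∈ range (r.parts 0),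
        f (c.2 - c.1 - k + r.conj k) / f (c.2 - c.1 - k - 1 + r.conj k) =
      boundaryProd f r (c.2 - c.1) c.2 := fun c => by
    rw [← boundaryProd_parts_zero, boundaryProd_eq hf]
  have hrow : ∏ c ∈ p.cells, (f ((c.2 : ℤ) - c.1 - c.2 + r.conj c.2) *
      ∏ k ∈ range c.2, f ((c.2 : ℤ) - c.1 - k + r.conj k) /
        f ((c.2 : ℤ) - c.1 - k - 1 + r.conj k)) = ∏ c ∈ p.cells, f (ghook p r c.1 c.2) := by
    simp only [Ptn.prod_cells_eq_prod_rows]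
    refine prod_congr rfl fun a _ => ?_
    rw [prod_row_hook hf]
    exact prod_congr rfl fun k _ => by congr 1; rw [ghook]; ring
  have hcol : ∏ c ∈ p.cells, ∏ i ∈ range (r.conj c.2),
      f ((c.2 : ℤ) - c.1 + i - r.parts i) / f ((c.2 : ℤ) - c.1 + i + 1 - r.parts i) =
      (∏ c ∈ r.cells, f (-ghook r p c.1 c.2)) / ∏ c ∈ r.cells, f (c.1 - c.2) := by
    rw [p.prod_cells_column_comm r (fun a i k =>
      f ((k : ℤ) - a + i - r.parts i) / f ((k : ℤ) - a + i + 1 - r.parts i)),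
      ← r.prod_cells_reflect (fun i k => f (i - k)), ← prod_div_distrib]
    refine prod_congr rfl fun d hd => ?_
    rw [Ptn.mem_cells] at hd
    have ht := prod_Ico_div_of_ne_zero
      (g := fun a : ℕ => (f ((d.2 : ℤ) - a + d.1 + 1 - r.parts d.1))⁻¹)
      (fun _ => inv_ne_zero (hf _)) (Nat.zero_le (p.conj d.2))
    rw [← range_eq_Ico] at ht
    have e₁ : (d.1 : ℤ) - ((r.parts d.1 - 1 - d.2 : ℕ) : ℤ) =
        (d.2 : ℤ) - (0 : ℕ) + d.1 + 1 - r.parts d.1 := by omega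
    have e₂ : -ghook r p d.1 d.2 = (d.2 : ℤ) - p.conj d.2 + d.1 + 1 - r.parts d.1 := by
      rw [ghook]; ring
    rw [e₁, e₂]
    rw [inv_div_inv] at ht
    rw [← ht]
    refine prod_congr rfl fun a _ => ?_
    rw [inv_div_inv]
    congr 2
    push_cast
    ring
  simp only [hsplit, boundaryProd]
  rw [prod_mul_distrib, hrow, hcol]
  have h₀ : ∏ c ∈ r.cells, f (c.1 - c.2) ≠ 0 := prod_ne_zero_iff.2 fun _ _ => hf _
  field_simp

end Telescoping

section Indeterminates

variable {K : Type*} [Field K]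

theorem Xst_mul_pow {q x y : K} (hq : q ≠ 0) (hxy : ∀ m : ℤ, q ^ m * x - y ≠ 0) (p r : Ptn) :
    Xst q x y p r * q ^ (∑ c ∈ r.cells, p.conj c.2) =
      (∏ c ∈ p.cells, (q ^ ghook p r c.1 c.2 * x - y)) *
        ∏ c ∈ r.cells, (q ^ ghook r p c.1 c.2 * y - x) := by
  have hneg : ∀ m : ℤ, q ^ m * y - x = -q ^ m * (q ^ (-m) * x - y) := fun m => by
    have := zpow_ne_zero m hq
    rw [zpow_neg]
    field_simp
    ring
  have hsub : ∀ m e : ℤ, q ^ m * x - q ^ e * y = q ^ e * (q ^ (m - e) * x - y) := fun m e => by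
    have := zpow_ne_zero e hq
    rw [zpow_sub₀ hq]
    field_simp
  have hrow : ∀ c : ℕ × ℕ, (q ^ ((c.2 : ℤ) - c.1) * x - q ^ (r.parts 0 : ℤ) * y) *
      ∏ k ∈ range (r.parts 0),
        (q ^ ((c.2 : ℤ) - c.1) * x - q ^ (((k : ℤ) + 1) - 1 - (r.conj k : ℤ)) * y) /
          (q ^ ((c.2 : ℤ) - c.1) * x - q ^ (((k : ℤ) + 1) - (r.conj k : ℤ)) * y) =
      (q ^ ((c.2 : ℤ) - c.1 - r.parts 0) * x - y) * ∏ k ∈ range (r.parts 0),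
        (q ^ ((c.2 : ℤ) - c.1 - k + r.conj k) * x - y) /
          (q ^ ((c.2 : ℤ) - c.1 - k - 1 + r.conj k) * x - y) := fun c => by
    have hk : ∀ k : ℕ,
        (q ^ ((c.2 : ℤ) - c.1) * x - q ^ (((k : ℤ) + 1) - 1 - (r.conj k : ℤ)) * y) /
          (q ^ ((c.2 : ℤ) - c.1) * x - q ^ (((k : ℤ) + 1) - (r.conj k : ℤ)) * y) =
        q⁻¹ * ((q ^ ((c.2 : ℤ) - c.1 - k + r.conj k) * x - y) /
          (q ^ ((c.2 : ℤ) - c.1 - k - 1 + r.conj k) * x - y)) := fun k => by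
      rw [hsub, hsub, mul_div_mul_comm, ← zpow_sub₀ hq, ← zpow_neg_one]
      congr 2
      · ring
      · congr 3; ring
      · congr 3; ring
    simp only [hk]
    rw [prod_mul_distrib, prod_const, card_range, hsub, zpow_natCast, inv_pow]
    have := pow_ne_zero (r.parts 0) hq
    field_simp
  have hfac : (∏ c ∈ r.cells, -q ^ ((c.2 : ℤ) - c.1)) * q ^ (∑ c ∈ r.cells, p.conj c.2) =
      ∏ c ∈ r.cells, -q ^ ghook r p c.1 c.2 := by
    rw [← r.prod_cells_reflect (fun i j => -q ^ ((j : ℤ) - i)), ← prod_pow_eq_pow_sum,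
      ← prod_mul_distrib]
    refine prod_congr rfl fun c hc => ?_
    rw [Ptn.mem_cells] at hc
    rw [neg_mul, ← zpow_natCast, ← zpow_add₀ hq, ghook]
    congr 2
    omega
  rw [Xst, Ptn.finprod_rows, Ptn.finprod_rows]
  simp only [hrow, hneg, neg_sub]
  rw [prod_mul_distrib (s := r.cells), prod_mul_distrib (s := r.cells), ← hfac]
  have := prod_content_eq_prod_ghook (f := fun m => q ^ m * x - y) hxy p r
  linear_combination (∏ c ∈ r.cells, -q ^ ((c.2 : ℤ) - c.1)) *
    q ^ (∑ c ∈ r.cells, p.conj c.2) * this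

theorem Xst_mul_pow_eq_prod_sub_one {q x y : K} (hq : q ≠ 0) (hx : x ≠ 0) (hy : y ≠ 0)
    (hxy : ∀ m : ℤ, q ^ m * x - y ≠ 0) (p r : Ptn) :
    Xst q x y p r * q ^ (∑ c ∈ r.cells, p.conj c.2) =
      (y ^ p.size * x ^ r.size) *
      ((∏ c ∈ p.cells, (q ^ ghook p r c.1 c.2 * x * y⁻¹ - 1)) *
        ∏ c ∈ r.cells, (q ^ ghook r p c.1 c.2 * y * x⁻¹ - 1)) := by
  have h : ∀ {x y : K}, y ≠ 0 → ∀ p r : Ptn, ∏ c ∈ p.cells, (q ^ ghook p r c.1 c.2 * x - y) =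
      y ^ p.size * ∏ c ∈ p.cells, (q ^ ghook p r c.1 c.2 * x * y⁻¹ - 1) := fun hy p r => by
    rw [p.size_eq_card_cells, ← prod_const, ← prod_mul_distrib]
    exact prod_congr rfl fun c _ => by field_simp
  rw [Xst_mul_pow hq hxy, h hy, h hx]
  ring

end Indeterminates

theorem qK_ne_zero (l : ℕ) : qK l ≠ 0 := by
  simp [qK, MvPolynomial.X_ne_zero]

theorem QK_ne_zero (l : ℕ) (s : Fin l) : QK l s ≠ 0 := by
  simp [QK, MvPolynomial.X_ne_zero]

theorem qK_pow_mul_QK_ne {l : ℕ} {s t : Fin l} (h : s ≠ t) (m : ℕ) :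
    qK l ^ m * QK l s ≠ QK l t := by
  intro he
  simp only [qK, QK, ← map_pow, ← map_mul] at he
  have he := IsFractionRing.injective (MvPolynomial (Fin (l + 1)) ℚ) (KK l) he
  have := congrArg (MvPolynomial.eval fun i => if i = t.succ then (0 : ℚ) else 1) he
  simp [h, (Fin.succ_ne_zero t).symm] at this

theorem qK_zpow_mul_QK_sub_ne_zero {l : ℕ} {s t : Fin l} (h : s ≠ t) (m : ℤ) :
    qK l ^ m * QK l s - QK l t ≠ 0 := by
  rw [sub_ne_zero]
  obtain ⟨n, rfl | rfl⟩ := m.eq_nat_or_neg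
  · exact_mod_cast qK_pow_mul_QK_ne h n
  · intro he
    refine qK_pow_mul_QK_ne h.symm n ?_
    have := pow_ne_zero n (qK_ne_zero l)
    rw [← he, zpow_neg, zpow_natCast]
    field_simp

@[to_additive]
theorem prod_prod_eq_diag_mul_Ioi {M : Type*} [CommMonoid M] {l : ℕ} (g : Fin l → Fin l → M) :
    ∏ s, ∏ t, g s t = (∏ s, g s s) * ∏ s, ∏ t ∈ Ioi s, g s t * g t s := by
  rw [prod_prod_Ioi_mul_eq_prod_prod_off_diag (fun s t => g t s), ← prod_mul_distrib]
  exact prod_congr rfl fun s _ => Fintype.prod_eq_mul_prod_compl s _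

theorem choose_two_sum {l : ℕ} (x : Fin l → ℕ) :
    (∑ s, x s).choose 2 = ∑ s, (x s).choose 2 + ∑ s, ∑ t ∈ Ioi s, x s * x t := by
  have h := sum_sum_eq_diag_add_Ioi fun s t => (x s : ℚ) * x t
  rw [← sum_mul_sum] at h
  have h2 : ∑ s, ∑ t ∈ Ioi s, ((x s : ℚ) * x t + x t * x s) =
      2 * ∑ s, ∑ t ∈ Ioi s, (x s : ℚ) * x t := by
    simp only [mul_sum]
    exact sum_congr rfl fun s _ => sum_congr rfl fun t _ => by ring
  have h3 : ∑ s, (x s : ℚ) * ((x s : ℚ) - 1) / 2 =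
      (∑ s, (x s : ℚ) * x s - ∑ s, (x s : ℚ)) / 2 := by
    rw [← sum_sub_distrib, sum_div]
    exact sum_congr rfl fun s _ => by ring
  rw [h2] at h
  rw [← Nat.cast_inj (R := ℚ)]
  push_cast [Nat.cast_choose_two]
  rw [h3]
  linear_combination h / 2

theorem alphaConj_eq {l : ℕ} (Λ : Fin l → Ptn) {B : ℕ} (hB : ∀ s, (Λ s).parts 0 ≤ B) :
    alphaConj Λ = ∑ s, ∑ k ∈ range B, ((Λ s).conj k).choose 2 := by
  have h : ∀ s, ∑ᶠ k, ((Λ s).conj k - 1) * (Λ s).conj k =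
      2 * ∑ k ∈ range B, ((Λ s).conj k).choose 2 := fun s => by
    rw [finsum_eq_sum_of_support_subset (s := range B), mul_sum]
    · refine sum_congr rfl fun k _ => ?_
      rw [Nat.choose_two_right, Nat.mul_div_cancel' (Nat.even_mul_pred_self _).two_dvd, mul_comm]
    · intro k hk
      by_contra hlt
      simp only [coe_range, Set.mem_Iio, not_lt] at hlt
      exact hk (by simp [Ptn.conj_eq_zero ((hB s).trans hlt)])
  rw [alphaConj]
  simp only [h]
  rw [← mul_sum, Nat.mul_div_cancel_left _ two_pos]

theorem nn_eq_alphaConj_add {l : ℕ} (Λ : Fin l → Ptn) (b : Ptn)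
    (hb : ∀ k, b.conj k = ∑ s, (Λ s).conj k) :
    b.nn = alphaConj Λ + ∑ s, ∑ t ∈ Ioi s, ∑ c ∈ (Λ t).cells, (Λ s).conj c.2 := by
  set B := b.parts 0 + ∑ s, (Λ s).parts 0 with hBdef
  have hB : ∀ s, (Λ s).parts 0 ≤ B := fun s =>
    (single_le_sum (f := fun s => (Λ s).parts 0) (fun _ _ => Nat.zero_le _) (mem_univ s)).trans
      (Nat.le_add_left _ _)
  have hD : ∀ s t, ∑ c ∈ (Λ t).cells, (Λ s).conj c.2 =
      ∑ k ∈ range B, (Λ s).conj k * (Λ t).conj k := fun s t => by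
    rw [(Λ t).sum_cells_eq_sum_columns (hB t)]
    exact sum_congr rfl fun k _ => by simp [mul_comm]
  rw [b.nn_eq_sum_choose (Nat.le_add_right _ _ : b.parts 0 ≤ B), alphaConj_eq Λ hB]
  simp only [hD, hb, choose_two_sum, sum_add_distrib]
  congr 1
  · exact sum_comm
  · rw [sum_comm]
    exact sum_congr rfl fun s _ => sum_comm

/-- Mathas's formula for the Schur element `s_λ(q)` of the Ariki–Koike
algebra equals the cancellation-free formula, in `ℚ(q, Q_0, …, Q_{l-1})`:
`(-1)^{n(l-1)} (Q_0⋯Q_{l-1})^{-n} q^{-α(λ')} ∏_s ∏_{(i,j)∈[λ^s]} Q_s [h^{λ^s,λ^s}_{i,j}]_q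
   ∏_{s<t} X(λ^s,λ^t;Q_s,Q_t)
 = (-1)^{n(l-1)} q^{-n(λ̄)} (q-1)^{-n} ∏_s ∏_{(i,j)∈[λ^s]} ∏_t (q^{h^{λ^s,λ^t}_{i,j}} Q_s Q_t⁻¹ - 1)`,
where `λ̄'_k = Σ_s λ^{s'}_k` characterises the rearrangement `λ̄` and
`[m]_q = (q^m - 1)/(q - 1)`. -/
theorem stmt6 (l n : ℕ) (Λ : Fin l → Ptn) (hn : ∑ s, (Λ s).size = n)
    (b : Ptn) (hb : ∀ k, b.conj k = ∑ s, (Λ s).conj k) :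
    (-1 : KK l) ^ (n * (l - 1)) * (∏ s, QK l s) ^ (-(n : ℤ)) *
        qK l ^ (-(alphaConj Λ : ℤ)) *
        (∏ s, ∏ᶠ i, ∏ j ∈ Finset.range ((Λ s).parts i),
          (QK l s * ((qK l ^ (ghook (Λ s) (Λ s) i j) - 1) / (qK l - 1)))) *
        (∏ s : Fin l, ∏ t ∈ Finset.Ioi s, Xst (qK l) (QK l s) (QK l t) (Λ s) (Λ t))
    = (-1 : KK l) ^ (n * (l - 1)) * qK l ^ (-(b.nn : ℤ)) * (qK l - 1) ^ (-(n : ℤ)) *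
        ∏ s, ∏ᶠ i, ∏ j ∈ Finset.range ((Λ s).parts i), ∏ t : Fin l,
          (qK l ^ (ghook (Λ s) (Λ t) i j) * QK l s * (QK l t)⁻¹ - 1) := by
  set q := qK l
  set Q := QK l
  have hq : q ≠ 0 := qK_ne_zero l
  have hQ : ∀ s, Q s ≠ 0 := QK_ne_zero l
  have hX : (∏ s, ∏ t ∈ Finset.Ioi s, Xst q (Q s) (Q t) (Λ s) (Λ t)) *
      q ^ (∑ s, ∑ t ∈ Finset.Ioi s, ∑ c ∈ (Λ t).cells, (Λ s).conj c.2) =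
      (∏ s, ∏ t ∈ Finset.Ioi s, Q t ^ (Λ s).size * Q s ^ (Λ t).size) *
      ∏ s, ∏ t ∈ Finset.Ioi s,
        (∏ c ∈ (Λ s).cells, (q ^ ghook (Λ s) (Λ t) c.1 c.2 * Q s * (Q t)⁻¹ - 1)) *
        ∏ c ∈ (Λ t).cells, (q ^ ghook (Λ t) (Λ s) c.1 c.2 * Q t * (Q s)⁻¹ - 1) := by
    simp only [← Finset.prod_pow_eq_pow_sum, ← Finset.prod_mul_distrib (s := Finset.univ),
      ← Finset.prod_mul_distrib (s := Finset.Ioi _)]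
    refine Finset.prod_congr rfl fun s _ => Finset.prod_congr rfl fun t ht => ?_
    rw [Finset.prod_pow_eq_pow_sum]
    exact Xst_mul_pow_eq_prod_sub_one hq (hQ s) (hQ t)
      (qK_zpow_mul_QK_sub_ne_zero (Finset.mem_Ioi.1 ht).ne) _ _
  have hpow : (∏ s, Q s ^ (Λ s).size) *
      ∏ s, ∏ t ∈ Finset.Ioi s, Q t ^ (Λ s).size * Q s ^ (Λ t).size = (∏ s, Q s) ^ n := by
    rw [← prod_prod_eq_diag_mul_Ioi (fun s t => Q t ^ (Λ s).size), ← hn,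
      ← Finset.prod_pow_eq_pow_sum]
    exact Finset.prod_congr rfl fun s _ => Finset.prod_pow _ _ _
  have hdiag : (∏ s, ∏ c ∈ (Λ s).cells,
      (Q s * ((q ^ ghook (Λ s) (Λ s) c.1 c.2 - 1) / (q - 1)))) =
      (∏ s, Q s ^ (Λ s).size) * (q - 1) ^ (-(n : ℤ)) *
        ∏ s, ∏ c ∈ (Λ s).cells, (q ^ ghook (Λ s) (Λ s) c.1 c.2 * Q s * (Q s)⁻¹ - 1) := by
    rw [zpow_neg, zpow_natCast, ← inv_pow, ← hn, ← Finset.prod_pow_eq_pow_sum,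
      ← Finset.prod_mul_distrib, ← Finset.prod_mul_distrib]
    refine Finset.prod_congr rfl fun s _ => ?_
    rw [Ptn.size_eq_card_cells, ← Finset.prod_const, ← Finset.prod_const,
      ← Finset.prod_mul_distrib, ← Finset.prod_mul_distrib]
    refine Finset.prod_congr rfl fun c _ => ?_
    rw [mul_inv_cancel_right₀ (hQ s)]
    ring
  simp only [Ptn.finprod_rows]
  rw [hdiag, nn_eq_alphaConj_add Λ b hb]
  simp only [Finset.prod_comm (s := Ptn.cells _)]
  rw [prod_prod_eq_diag_mul_Ioi (fun s t =>
    ∏ c ∈ (Λ s).cells, (q ^ ghook (Λ s) (Λ t) c.1 c.2 * Q s * (Q t)⁻¹ - 1))]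
  have hn0 : (∏ s, Q s) ^ n ≠ 0 := pow_ne_zero _ (Finset.prod_ne_zero_iff.2 fun s _ => hQ s)
  have hqD := pow_ne_zero (∑ s, ∑ t ∈ Finset.Ioi s, ∑ c ∈ (Λ t).cells, (Λ s).conj c.2) hq
  rw [← eq_div_iff hqD] at hX
  rw [hX, Nat.cast_add, neg_add, zpow_add₀ hq, zpow_neg (∏ s, Q s), zpow_natCast,
    zpow_neg q (Nat.cast (∑ s, _)), zpow_natCast, ← hpow]
  rw [← hpow] at hn0
  have h₁ := left_ne_zero_of_mul hn0
  have h₂ := right_ne_zero_of_mul hn0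
  field_simp
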